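/- arXiv:math/0005058 — 3 statements merged into one kernel-verified Lean document; each statement's English description precedes it below -/
import Mathlib

section
/- Generalized Feinstein's lemma (Lemma 3.1). Fix n ≥ 1, a probability mass function P_{Vⁿ} on 𝒱ⁿ, a channel Wⁿ, and any joint distribution P_{VⁿXⁿ} on 𝒱ⁿ × 𝒳ⁿ whose 𝒱ⁿ-marginal is P_{Vⁿ}; let (Vⁿ, Xⁿ, Yⁿ) have the joint law P_{VⁿXⁿ}(v,x)Wⁿ(y|x) with output marginal P_{Yⁿ}. Then for every γ > 0 there exists a joint source-channel code (φₙ, ψₙ) whose error probability εₙ satisfies εₙ ≤ Pr{ (1/n) log( Wⁿ(Yⁿ|Xⁿ) / P_{Yⁿ}(Yⁿ) ) ≤ (1/n) log( 1 / P_{Vⁿ}(Vⁿ) ) + γ } + e^{−nγ}. -/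
open Filter Real Topology

namespace ISC

/-- Words of length `n` over alphabet `A`. -/
abbrev Word (A : Type*) (n : ℕ) : Type _ := Fin n → A

/-- `p` is a probability mass function. -/
def IsPMF {α : Type*} (p : α → ℝ) : Prop :=
  (∀ a, 0 ≤ p a) ∧ HasSum p 1

/-- Probability of the event `S` under the pmf `p`. -/
noncomputable def prob {α : Type*} (p : α → ℝ) (S : Set α) : ℝ :=
  ∑' a, S.indicator p a

/-- Output marginal `P_{Yⁿ}` of the channel `W` fed with the joint input law `P_{VⁿXⁿ}`. -/
noncomputable def outDist {𝒱 𝒳 𝒴 : Type*} {n : ℕ}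
    (PVX : Word 𝒱 n × Word 𝒳 n → ℝ) (W : Word 𝒳 n → Word 𝒴 n → ℝ)
    (y : Word 𝒴 n) : ℝ :=
  ∑' vx : Word 𝒱 n × Word 𝒳 n, PVX vx * W vx.2 y

/-- Joint law of `(Vⁿ, Xⁿ, Yⁿ)`: `P_{VⁿXⁿ}(v,x) · Wⁿ(y|x)`. -/
noncomputable def jointLaw {𝒱 𝒳 𝒴 : Type*} {n : ℕ}
    (PVX : Word 𝒱 n × Word 𝒳 n → ℝ) (W : Word 𝒳 n → Word 𝒴 n → ℝ) :
    Word 𝒱 n × Word 𝒳 n × Word 𝒴 n → ℝ :=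
  fun z => PVX (z.1, z.2.1) * W z.2.1 z.2.2

/-- The joint input law `P_{VⁿXⁿ}` induced by the deterministic encoder `φ`:
`P_{Vⁿ}(v) 1{x = φ(v)}`. -/
noncomputable def codeInput {𝒱 𝒳 : Type*} [DecidableEq 𝒳] {n : ℕ} (PV : Word 𝒱 n → ℝ)
    (φ : Word 𝒱 n → Word 𝒳 n) : Word 𝒱 n × Word 𝒳 n → ℝ :=
  fun vx => if vx.2 = φ vx.1 then PV vx.1 else 0

/-- Error probability `εₙ` of the joint source-channel code `(φ, ψ)`. -/
noncomputable def errProb {𝒱 𝒳 𝒴 : Type*} {n : ℕ}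
    (PV : Word 𝒱 n → ℝ) (W : Word 𝒳 n → Word 𝒴 n → ℝ)
    (φ : Word 𝒱 n → Word 𝒳 n) (ψ : Word 𝒴 n → Word 𝒱 n) : ℝ :=
  ∑' v, PV v * prob (W (φ v)) {y | ψ y ≠ v}

/-- `V` is transmissible over `W`. -/
def Transmissible {𝒱 𝒳 𝒴 : Type*} (PV : (n : ℕ) → Word 𝒱 n → ℝ)
    (W : (n : ℕ) → Word 𝒳 n → Word 𝒴 n → ℝ) : Prop :=
  ∃ (φ : (n : ℕ) → Word 𝒱 n → Word 𝒳 n) (ψ : (n : ℕ) → Word 𝒴 n → Word 𝒱 n),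
    Tendsto (fun n => errProb (PV n) (W n) (φ n) (ψ n)) atTop (nhds 0)

/-- Output marginal of the channel `W` for an input distribution `P_{Xⁿ}`. -/
noncomputable def outDistX {𝒳 𝒴 : Type*} {n : ℕ}
    (PX : Word 𝒳 n → ℝ) (W : Word 𝒳 n → Word 𝒴 n → ℝ) (y : Word 𝒴 n) : ℝ :=
  ∑' x : Word 𝒳 n, PX x * W x y

/-- Joint law of `(Xⁿ, Yⁿ)`: `P_{Xⁿ}(x) · Wⁿ(y|x)`. -/
noncomputable def jointXY {𝒳 𝒴 : Type*} {n : ℕ}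
    (PX : Word 𝒳 n → ℝ) (W : Word 𝒳 n → Word 𝒴 n → ℝ) :
    Word 𝒳 n × Word 𝒴 n → ℝ :=
  fun z => PX z.1 * W z.1 z.2

/-- Limit superior in probability of a sequence of random variables `Z i`
distributed according to the pmfs `p i`. -/
noncomputable def plimsup {α : ℕ → Type*} (p : (i : ℕ) → α i → ℝ)
    (Z : (i : ℕ) → α i → ℝ) : EReal :=
  sInf {β : EReal |
    Tendsto (fun i => prob (p i) {a | β < (Z i a : EReal)}) atTop (nhds 0)}

/-- Limit inferior in probability of a sequence of random variables `Z i`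
distributed according to the pmfs `p i`. -/
noncomputable def pliminf {α : ℕ → Type*} (p : (i : ℕ) → α i → ℝ)
    (Z : (i : ℕ) → α i → ℝ) : EReal :=
  sSup {β : EReal |
    Tendsto (fun i => prob (p i) {a | (Z i a : EReal) < β}) atTop (nhds 0)}

/-- Spectral sup-entropy rate `H̄(V)`. -/
noncomputable def Hbar {𝒱 : Type*} (PV : (n : ℕ) → Word 𝒱 n → ℝ) : EReal :=
  plimsup (fun n => PV n) (fun n v => (1 / (n : ℝ)) * Real.log (1 / PV n v))

/-- Spectral inf-entropy rate `H_(V)`. -/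
noncomputable def Hlow {𝒱 : Type*} (PV : (n : ℕ) → Word 𝒱 n → ℝ) : EReal :=
  pliminf (fun n => PV n) (fun n v => (1 / (n : ℝ)) * Real.log (1 / PV n v))

/-- Spectral inf-information rate `I_(X;Y)` of the channel `W` with input `X`. -/
noncomputable def Ilow {𝒳 𝒴 : Type*} (PX : (n : ℕ) → Word 𝒳 n → ℝ)
    (W : (n : ℕ) → Word 𝒳 n → Word 𝒴 n → ℝ) : EReal :=
  pliminf (fun n => jointXY (PX n) (W n))
    (fun n z => (1 / (n : ℝ)) * Real.log (W n z.1 z.2 / outDistX (PX n) (W n) z.2))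

/-- Spectral sup-information rate `Ī(X;Y)` of the channel `W` with input `X`. -/
noncomputable def Ihigh {𝒳 𝒴 : Type*} (PX : (n : ℕ) → Word 𝒳 n → ℝ)
    (W : (n : ℕ) → Word 𝒳 n → Word 𝒴 n → ℝ) : EReal :=
  plimsup (fun n => jointXY (PX n) (W n))
    (fun n z => (1 / (n : ℝ)) * Real.log (W n z.1 z.2 / outDistX (PX n) (W n) z.2))

/-- `sup_X I_(X;Y)`: the supremum over all channel inputs. -/
noncomputable def supIlow {𝒳 𝒴 : Type*}
    (W : (n : ℕ) → Word 𝒳 n → Word 𝒴 n → ℝ) : EReal :=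
  ⨆ PX : {PX : (n : ℕ) → Word 𝒳 n → ℝ // ∀ n, IsPMF (PX n)}, Ilow PX.1 W

/-!
Feinstein's greedy construction. Let `B(v, x)` be the set of outputs `y` with
`P_Y(y) < W(y|x) P_V(v) e^{-nγ}`; summing over `y` gives `P_Y(B(v, x)) ≤ P_V(v) e^{-nγ}` for
*every* `x`. Well-order the source words and decode `y` to the least `v` with `y ∈ B(v, φ(v))`, so
that `v` is misdecoded only if `y` misses `B(v, φ(v))` or falls into `B(u, φ(u))` for some `u < v`.
Choose `φ(v)` by recursion on `v` so that the probability of this event is at most its conditional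
mean given `V = v`. Averaged over `v`, the first alternative contributes the probability that the
information density is small, and the second at most `P_Y(⋃ B(u, φ(u))) ≤ e^{-nγ}`.
-/

section

open scoped ENNReal

variable {ι α V X Y : Type*}

lemma toOuterMeasure_ne_top (p : PMF α) (s : Set α) : p.toOuterMeasure s ≠ ∞ := by
  rw [PMF.toOuterMeasure_apply]
  exact p.tsum_coe_indicator_ne_top s

lemma toOuterMeasure_iUnion_le (p : PMF α) (s : ι → Set α) :
    p.toOuterMeasure (⋃ i, s i) ≤ ∑' i, p.toOuterMeasure (s i) := by
  simp only [PMF.toOuterMeasure_apply]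
  rw [ENNReal.tsum_comm]
  refine ENNReal.tsum_le_tsum fun a => Set.indicator_apply_le' (fun ha => ?_) fun _ => zero_le
  obtain ⟨i, hi⟩ := Set.mem_iUnion.1 ha
  exact (Set.indicator_of_mem hi p).symm.le.trans (ENNReal.le_tsum i)

lemma toOuterMeasure_setOf_lt_mul_le (p q : PMF α) (c : ℝ≥0∞) :
    p.toOuterMeasure {a | p a < q a * c} ≤ c :=
  calc p.toOuterMeasure {a | p a < q a * c}
      ≤ ∑' a, q a * c := by
        rw [PMF.toOuterMeasure_apply]
        exact ENNReal.tsum_le_tsum fun a =>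
          Set.indicator_apply_le' (fun ha => ha.le) fun _ => zero_le
    _ = c := by rw [ENNReal.tsum_mul_right, q.tsum_coe, one_mul]

lemma map_fst_apply (P : PMF (V × X)) (v : V) : P.map Prod.fst v = ∑' x, P (v, x) := by
  rw [PMF.map_apply, ENNReal.tsum_prod', tsum_eq_single v]
  · simp only [if_true]
  · intro u hu
    simp only [hu.symm, if_false, tsum_zero]

lemma exists_tsum_mul_le_tsum_mul [Nonempty X] {q : X → ℝ≥0∞} (hq : ∑' x, q x ≠ ∞)
    (f : X → ℝ≥0∞) : ∃ x, (∑' x, q x) * f x ≤ ∑' x, q x * f x := by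
  by_contra! hlt
  obtain ⟨x₀, hx₀⟩ : ∃ x, q x ≠ 0 := by
    by_contra! h0
    simp [h0] at hlt
  have hmean : ∑' x, q x * f x ≠ ∞ := ((hlt x₀).trans_le le_top).ne
  have hsum : ∑' x, q x * ∑' x, q x * f x < ∑' x, q x * ((∑' x, q x) * f x) := by
    refine ENNReal.tsum_lt_tsum (i := x₀) ?_ (fun x => ?_) ?_
    · rw [ENNReal.tsum_mul_right]
      exact ENNReal.mul_ne_top hq hmean
    · gcongr
      exact (hlt x).le
    · exact ENNReal.mul_lt_mul_right hx₀ (ENNReal.ne_top_of_tsum_ne_top hq x₀) (hlt x₀)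
  simp only [mul_left_comm (q _), ENNReal.tsum_mul_left, ENNReal.tsum_mul_right, lt_self_iff_false]
    at hsum

lemma exists_forall_of_wellFoundedLT {β : ι → Type*} [LT ι] [WellFoundedLT ι]
    {C : (i : ι) → ((j : ι) → j < i → β j) → β i → Prop} (hC : ∀ i g, ∃ b, C i g b) :
    ∃ φ : (i : ι) → β i, ∀ i, C i (fun j _ => φ j) (φ i) := by
  choose F hF using hC
  refine ⟨wellFounded_lt.fix F, fun i => ?_⟩
  rw [wellFounded_lt.fix_eq F i]
  exact hF i _

/-- The joint law of source word, channel input and channel output when the pair of the first two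
has law `P` and the input is sent through `W`; the `PMF` counterpart of `jointLaw`, on arbitrary
types. -/
noncomputable def jointPMF (P : PMF (V × X)) (W : X → PMF Y) : PMF (V × X × Y) :=
  P.bind fun vx => (W vx.2).map fun y => (vx.1, vx.2, y)

/-- The law of the channel output when source word and channel input have joint law `P`;
the `PMF` counterpart of `outDist`, on arbitrary types. -/
noncomputable def outputPMF (P : PMF (V × X)) (W : X → PMF Y) : PMF Y :=
  P.bind fun vx => W vx.2

lemma toOuterMeasure_jointPMF (P : PMF (V × X)) (W : X → PMF Y) (S : Set (V × X × Y)) :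
    (jointPMF P W).toOuterMeasure S
      = ∑' v, ∑' x, P (v, x) * (W x).toOuterMeasure {y | (v, x, y) ∈ S} := by
  rw [jointPMF, PMF.toOuterMeasure_bind_apply, ENNReal.tsum_prod']
  simp only [PMF.toOuterMeasure_map_apply, Set.preimage]

lemma jointPMF_apply (P : PMF (V × X)) (W : X → PMF Y) (v : V) (x : X) (y : Y) :
    jointPMF P W (v, x, y) = P (v, x) * W x y := by
  rw [← PMF.toOuterMeasure_apply_singleton, toOuterMeasure_jointPMF, tsum_eq_single v,
    tsum_eq_single x]
  · simp [PMF.toOuterMeasure_apply_singleton]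
  · intro x' hx
    simp [hx]
  · intro v' hv
    simp [hv]

lemma toOuterMeasure_outputPMF (P : PMF (V × X)) (W : X → PMF Y) (S : Set Y) :
    (outputPMF P W).toOuterMeasure S = ∑' v, ∑' x, P (v, x) * (W x).toOuterMeasure S := by
  rw [outputPMF, PMF.toOuterMeasure_bind_apply, ENNReal.tsum_prod']

lemma exists_decoder_setOf_ne_subset [LinearOrder V] [WellFoundedLT V] [Nonempty V]
    (D : V → Set Y) : ∃ ψ : Y → V, ∀ v, {y | ψ y ≠ v} ⊆ (D v)ᶜ ∪ ⋃ u < v, D u := by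
  have hleast : ∀ y, ∃ u, ∀ v, y ∈ D v → u ≤ v ∧ y ∈ D u := by
    intro y
    by_cases hy : {v | y ∈ D v}.Nonempty
    · exact ⟨wellFounded_lt.min _ hy, fun v hv =>
        ⟨wellFounded_lt.min_le (s := {v | y ∈ D v}) hv, wellFounded_lt.min_mem _ hy⟩⟩
    · exact ⟨Classical.arbitrary V, fun v hv => (hy ⟨v, hv⟩).elim⟩
  choose ψ hψ using hleast
  refine ⟨ψ, fun v y hne => or_iff_not_imp_left.2 fun hy => ?_⟩
  obtain ⟨hle, hmem⟩ := hψ y v (not_not.1 hy)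
  exact Set.mem_biUnion (hle.lt_of_ne hne) hmem

lemma exists_encoder_mul_le_tsum_mul [LinearOrder V] [WellFoundedLT V] [Nonempty X]
    (P : PMF (V × X)) (W : X → PMF Y) (B : V → X → Set Y) :
    ∃ φ : V → X, ∀ v,
      P.map Prod.fst v * (W (φ v)).toOuterMeasure ((B v (φ v))ᶜ ∪ ⋃ u < v, B u (φ u))
        ≤ ∑' x, P (v, x) * (W x).toOuterMeasure ((B v x)ᶜ ∪ ⋃ u < v, B u (φ u)) := by
  refine exists_forall_of_wellFoundedLT (C := fun v g z =>
    P.map Prod.fst v * (W z).toOuterMeasure ((B v z)ᶜ ∪ ⋃ (u) (hu : u < v), B u (g u hu))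
      ≤ ∑' x, P (v, x) * (W x).toOuterMeasure ((B v x)ᶜ ∪ ⋃ (u) (hu : u < v), B u (g u hu)))
    fun v g => ?_
  have hfin : ∑' x, P (v, x) ≠ ∞ := map_fst_apply P v ▸ PMF.apply_ne_top _ v
  rw [map_fst_apply]
  exact exists_tsum_mul_le_tsum_mul hfin _

theorem exists_code_error_le_add_tsum_outputPMF (P : PMF (V × X)) (W : X → PMF Y)
    (B : V → X → Set Y) :
    ∃ (φ : V → X) (ψ : Y → V),
      ∑' v, P.map Prod.fst v * (W (φ v)).toOuterMeasure {y | ψ y ≠ v}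
        ≤ (jointPMF P W).toOuterMeasure {z | z.2.2 ∉ B z.1 z.2.1}
          + ∑' v, (outputPMF P W).toOuterMeasure (B v (φ v)) := by
  obtain ⟨⟨v₀, x₀⟩, -⟩ := P.support_nonempty
  have : Nonempty V := ⟨v₀⟩
  have : Nonempty X := ⟨x₀⟩
  obtain ⟨_, _⟩ := exists_wellFoundedLT V
  obtain ⟨φ, hφ⟩ := exists_encoder_mul_le_tsum_mul P W B
  obtain ⟨ψ, hψ⟩ := exists_decoder_setOf_ne_subset fun v => B v (φ v)
  have hunion : ∀ v x, (W x).toOuterMeasure ((B v x)ᶜ ∪ ⋃ u < v, B u (φ u))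
      ≤ (W x).toOuterMeasure (B v x)ᶜ + (W x).toOuterMeasure (⋃ u, B u (φ u)) := fun v x =>
    (MeasureTheory.measure_union_le _ _).trans <| by
      gcongr with u
      exact Set.iUnion_subset fun _ => subset_rfl
  refine ⟨φ, ψ, ?_⟩
  calc ∑' v, P.map Prod.fst v * (W (φ v)).toOuterMeasure {y | ψ y ≠ v}
      ≤ ∑' v, ∑' x, P (v, x) * (W x).toOuterMeasure ((B v x)ᶜ ∪ ⋃ u < v, B u (φ u)) := by
        gcongr with v
        refine le_trans ?_ (hφ v)
        gcongr
        exact hψ v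
    _ ≤ ∑' v, ∑' x, P (v, x) * ((W x).toOuterMeasure (B v x)ᶜ
          + (W x).toOuterMeasure (⋃ u, B u (φ u))) := by
        gcongr with v x
        exact hunion v x
    _ = (jointPMF P W).toOuterMeasure {z | z.2.2 ∉ B z.1 z.2.1}
          + (outputPMF P W).toOuterMeasure (⋃ u, B u (φ u)) := by
        simp only [mul_add, ENNReal.tsum_add, toOuterMeasure_jointPMF, toOuterMeasure_outputPMF]
        rfl
    _ ≤ _ := by
        gcongr
        exact toOuterMeasure_iUnion_le _ _

theorem exists_code_error_le_add (P : PMF (V × X)) (W : X → PMF Y) (c : ℝ≥0∞) :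
    ∃ (φ : V → X) (ψ : Y → V),
      ∑' v, P.map Prod.fst v * (W (φ v)).toOuterMeasure {y | ψ y ≠ v}
        ≤ (jointPMF P W).toOuterMeasure
            {z | W z.2.1 z.2.2 * (P.map Prod.fst z.1 * c) ≤ outputPMF P W z.2.2} + c := by
  obtain ⟨φ, ψ, hcode⟩ := exists_code_error_le_add_tsum_outputPMF P W
    fun v x => {y | outputPMF P W y < W x y * (P.map Prod.fst v * c)}
  simp only [Set.mem_ofPred_eq, not_lt] at hcode
  refine ⟨φ, ψ, hcode.trans ?_⟩
  gcongr
  calc ∑' v, (outputPMF P W).toOuterMeasure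
          {y | outputPMF P W y < W (φ v) y * (P.map Prod.fst v * c)}
      ≤ ∑' v, P.map Prod.fst v * c :=
        ENNReal.tsum_le_tsum fun v => toOuterMeasure_setOf_lt_mul_le _ _ _
    _ = c := by rw [ENNReal.tsum_mul_right, PMF.tsum_coe, one_mul]

end

section

variable {α V X Y 𝒱 𝒳 𝒴 : Type*} {n : ℕ}

lemma IsPMF.exists_pmf {p : α → ℝ} (hp : IsPMF p) : ∃ P : PMF α, p = fun a => (P a).toReal := by
  have hsum : HasSum (fun a => ENNReal.ofReal (p a)) 1 := by
    rw [ENNReal.summable.hasSum_iff, ← ENNReal.ofReal_tsum_of_nonneg hp.1 hp.2.summable,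
      hp.2.tsum_eq, ENNReal.ofReal_one]
  exact ⟨⟨_, hsum⟩, funext fun a => (ENNReal.toReal_ofReal (hp.1 a)).symm⟩

lemma prob_toReal (P : PMF α) (S : Set α) :
    prob (fun a => (P a).toReal) S = (P.toOuterMeasure S).toReal := by
  have hfin : ∀ a, S.indicator P a ≠ ⊤ := fun a =>
    ne_top_of_le_ne_top (P.apply_ne_top a) (Set.indicator_le_self _ _ _)
  rw [prob, PMF.toOuterMeasure_apply, ENNReal.tsum_toReal_eq hfin]
  exact tsum_congr fun a => by by_cases ha : a ∈ S <;> simp [ha]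

lemma outDist_toReal (P : PMF (Word 𝒱 n × Word 𝒳 n)) (W : Word 𝒳 n → PMF (Word 𝒴 n))
    (y : Word 𝒴 n) :
    outDist (fun vx => (P vx).toReal) (fun x y => (W x y).toReal) y = (outputPMF P W y).toReal := by
  rw [outputPMF, PMF.bind_apply, ENNReal.tsum_toReal_eq fun vx =>
    ENNReal.mul_ne_top (P.apply_ne_top vx) ((W vx.2).apply_ne_top y)]
  simp only [outDist, ENNReal.toReal_mul]

lemma jointLaw_toReal (P : PMF (Word 𝒱 n × Word 𝒳 n)) (W : Word 𝒳 n → PMF (Word 𝒴 n)) :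
    jointLaw (fun vx => (P vx).toReal) (fun x y => (W x y).toReal)
      = fun z => (jointPMF P W z).toReal := by
  ext ⟨v, x, y⟩
  rw [jointPMF_apply, ENNReal.toReal_mul, jointLaw]

lemma errProb_toReal (p : PMF (Word 𝒱 n)) (W : Word 𝒳 n → PMF (Word 𝒴 n))
    (φ : Word 𝒱 n → Word 𝒳 n) (ψ : Word 𝒴 n → Word 𝒱 n) :
    errProb (fun v => (p v).toReal) (fun x y => (W x y).toReal) φ ψ
      = (∑' v, p v * (W (φ v)).toOuterMeasure {y | ψ y ≠ v}).toReal := by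
  have hfin : ∀ v, p v * (W (φ v)).toOuterMeasure {y | ψ y ≠ v} ≠ ⊤ := fun v =>
    ENNReal.mul_ne_top (p.apply_ne_top v) (toOuterMeasure_ne_top _ _)
  simp only [errProb, prob_toReal, ENNReal.tsum_toReal_eq hfin, ENNReal.toReal_mul]

lemma log_div_le_of_mul_mul_exp_le {w p q r γ : ℝ} (hr : 0 < r) (hw : 0 < w) (hp : 0 < p)
    (h : w * (p * Real.exp (-(r * γ))) ≤ q) :
    1 / r * Real.log (w / q) ≤ 1 / r * Real.log (1 / p) + γ := by
  have hq : 0 < q := lt_of_lt_of_le (by positivity) h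
  have hratio : w / q ≤ 1 / p * Real.exp (r * γ) := by
    rw [Real.exp_neg] at h
    field_simp at h ⊢
    linarith
  have hlog : Real.log (w / q) ≤ Real.log (1 / p) + r * γ := by
    rw [← Real.log_exp (r * γ), ← Real.log_mul (by positivity) (by positivity)]
    exact Real.log_le_log (by positivity) hratio
  calc 1 / r * Real.log (w / q) ≤ 1 / r * (Real.log (1 / p) + r * γ) := by gcongr
    _ = 1 / r * Real.log (1 / p) + γ := by field_simp

lemma setOf_mul_le_inter_support_jointPMF_subset (P : PMF (V × X)) (W : X → PMF Y)
    {r : ℝ} (hr : 0 < r) (γ : ℝ) :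
    {z | W z.2.1 z.2.2 * (P.map Prod.fst z.1 * ENNReal.ofReal (Real.exp (-(r * γ))))
        ≤ outputPMF P W z.2.2} ∩ (jointPMF P W).support
      ⊆ {z | 1 / r * Real.log ((W z.2.1 z.2.2).toReal / (outputPMF P W z.2.2).toReal)
        ≤ 1 / r * Real.log (1 / (P.map Prod.fst z.1).toReal) + γ} := by
  rintro ⟨v, x, y⟩ ⟨hle, hsupp⟩
  rw [PMF.mem_support_iff, jointPMF_apply, mul_ne_zero_iff] at hsupp
  have hv : P.map Prod.fst v ≠ 0 := by
    rw [map_fst_apply]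
    exact ne_bot_of_le_ne_bot hsupp.1 (ENNReal.le_tsum x)
  have hle_real := ENNReal.toReal_mono (PMF.apply_ne_top _ y) hle
  rw [ENNReal.toReal_mul, ENNReal.toReal_mul, ENNReal.toReal_ofReal (Real.exp_pos _).le]
    at hle_real
  exact log_div_le_of_mul_mul_exp_le hr (ENNReal.toReal_pos hsupp.2 (PMF.apply_ne_top _ y))
    (ENNReal.toReal_pos hv (PMF.apply_ne_top _ v)) hle_real

end

theorem generalized_feinstein_lemma_general {𝒱 𝒳 𝒴 : Type*} {n : ℕ} (hn : n ≠ 0)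
    {PV : Word 𝒱 n → ℝ} {W : Word 𝒳 n → Word 𝒴 n → ℝ} (hW : ∀ x, IsPMF (W x))
    {PVX : Word 𝒱 n × Word 𝒳 n → ℝ} (hPVX : IsPMF PVX)
    (hmarg : ∀ v, (∑' x : Word 𝒳 n, PVX (v, x)) = PV v) (γ : ℝ) :
    ∃ (φ : Word 𝒱 n → Word 𝒳 n) (ψ : Word 𝒴 n → Word 𝒱 n),
      errProb PV W φ ψ ≤
        prob (jointLaw PVX W)
          {z : Word 𝒱 n × Word 𝒳 n × Word 𝒴 n |
            (1 / (n : ℝ)) * Real.log (W z.2.1 z.2.2 / outDist PVX W z.2.2) ≤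
              (1 / (n : ℝ)) * Real.log (1 / PV z.1) + γ}
        + Real.exp (-((n : ℝ) * γ)) := by
  obtain ⟨P, rfl⟩ := hPVX.exists_pmf
  choose w hw using fun x => (hW x).exists_pmf
  obtain rfl : W = fun x y => (w x y).toReal := funext hw
  obtain rfl : PV = fun v => (P.map Prod.fst v).toReal := funext fun v => by
    rw [← hmarg, map_fst_apply, ENNReal.tsum_toReal_eq fun x => P.apply_ne_top (v, x)]
  obtain ⟨φ, ψ, hcode⟩ := exists_code_error_le_add P w (ENNReal.ofReal (Real.exp (-(n * γ))))
  refine ⟨φ, ψ, ?_⟩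
  have hn_pos : (0 : ℝ) < n := Nat.cast_pos.2 (Nat.pos_of_ne_zero hn)
  simp only [errProb_toReal, jointLaw_toReal, prob_toReal, outDist_toReal]
  rw [← ENNReal.toReal_ofReal (Real.exp_pos (-(n * γ))).le,
    ← ENNReal.toReal_add (toOuterMeasure_ne_top _ _) ENNReal.ofReal_ne_top]
  refine ENNReal.toReal_mono
    (ENNReal.add_ne_top.2 ⟨toOuterMeasure_ne_top _ _, ENNReal.ofReal_ne_top⟩) (hcode.trans ?_)
  gcongr ?_ + _
  exact PMF.toOuterMeasure_mono _ (setOf_mul_le_inter_support_jointPMF_subset P w hn_pos γ)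

/-- **Generalized Feinstein's lemma** (Lemma 3.1). -/
theorem generalized_feinstein_lemma
    {𝒱 𝒳 𝒴 : Type} [Countable 𝒱] [Countable 𝒳] [Countable 𝒴]
    (n : ℕ) (hn : 1 ≤ n)
    (PV : Word 𝒱 n → ℝ) (hPV : IsPMF PV)
    (W : Word 𝒳 n → Word 𝒴 n → ℝ) (hW : ∀ x, IsPMF (W x))
    (PVX : Word 𝒱 n × Word 𝒳 n → ℝ) (hPVX : IsPMF PVX)
    (hmarg : ∀ v, (∑' x : Word 𝒳 n, PVX (v, x)) = PV v)
    (γ : ℝ) (hγ : 0 < γ) :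
    ∃ (φ : Word 𝒱 n → Word 𝒳 n) (ψ : Word 𝒴 n → Word 𝒱 n),
      errProb PV W φ ψ ≤
        prob (jointLaw PVX W)
          {z : Word 𝒱 n × Word 𝒳 n × Word 𝒴 n |
            (1 / (n : ℝ)) * Real.log (W z.2.1 z.2.2 / outDist PVX W z.2.2) ≤
              (1 / (n : ℝ)) * Real.log (1 / PV z.1) + γ}
        + Real.exp (-((n : ℝ) * γ)) := by
  exact generalized_feinstein_lemma_general (Nat.one_le_iff_ne_zero.1 hn) hW hPVX hmarg γ

end ISC
end

section
/- Generalized Verdú–Han lemma (Lemma 3.2). Fix n ≥ 1, a probability mass function P_{Vⁿ} on 𝒱ⁿ, a channel Wⁿ, and any joint source-channel code (φₙ, ψₙ) with error probability εₙ. Put Xⁿ = φₙ(Vⁿ) and let Yⁿ be the channel output, i.e. (Vⁿ, Xⁿ, Yⁿ) has joint law P_{Vⁿ}(v) 1{x = φₙ(v)} Wⁿ(y|x), with output marginal P_{Yⁿ}. Then for every γ > 0, εₙ ≥ Pr{ (1/n) log( Wⁿ(Yⁿ|Xⁿ) / P_{Yⁿ}(Yⁿ) ) ≤ (1/n) log(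 1 / P_{Vⁿ}(Vⁿ) ) − γ } − e^{−nγ}. -/
open Filter Real Topology

namespace ISC

/-! Let `Q` be the output marginal. On triples `(v, x, y)` of positive probability the event
reads `PV v * W x y ≤ exp (-nγ) * Q y`: by Bayes, for a deterministic encoder, the posterior
probability of the source word given the output is at most `exp (-nγ)`. So where the decoder `ψ`
is right, the joint law on the event is at most `exp (-nγ)` times the law of the triple obtained
by drawing `y` from `Q`, setting `v = ψ y` and encoding `v` anew. The latter law has total mass
`1`, so outside the decoding errors the event has probability at most `exp (-nγ)`. -/

section PMF

variable {α β ι : Type*} {p : α → ℝ}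

lemma IsPMF.comp_equiv (hp : IsPMF p) (e : β ≃ α) : IsPMF (p ∘ e) :=
  ⟨fun b => hp.1 (e b), e.hasSum_iff.2 hp.2⟩

lemma isPMF_single [DecidableEq α] (a : α) : IsPMF (Pi.single a (1 : ℝ)) :=
  have nonneg : (0 : α → ℝ) ≤ Pi.single a 1 := Pi.single_nonneg.2 zero_le_one
  ⟨nonneg, hasSum_pi_single a 1⟩

lemma IsPMF.mul_kernel (hp : IsPMF p) {K : α → β → ℝ} (hK : ∀ a, IsPMF (K a)) :
    IsPMF fun z : α × β => p z.1 * K z.1 z.2 := by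
  have nonneg (z : α × β) : 0 ≤ p z.1 * K z.1 z.2 := mul_nonneg (hp.1 _) ((hK _).1 _)
  have row (a : α) : HasSum (fun b => p a * K a b) (p a) := by
    simpa using (hK a).2.mul_left (p a)
  have summable : Summable fun z : α × β => p z.1 * K z.1 z.2 := by
    refine (summable_prod_of_nonneg nonneg).2 ⟨fun a => (row a).summable, ?_⟩
    simpa only [(row _).tsum_eq] using hp.2.summable
  refine ⟨nonneg, ?_⟩
  rw [← (summable.hasSum.prod_fiberwise row).unique hp.2]
  exact summable.hasSum

lemma IsPMF.marginal_snd {p : α × β → ℝ} (hp : IsPMF p) : IsPMF fun b => ∑' a, p (a, b) :=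
  ⟨fun _ => tsum_nonneg fun _ => hp.1 _,
    (hp.comp_equiv (Equiv.prodComm β α)).2.prod_fiberwise fun b =>
      (hp.2.summable.prod_symm.prod_factor b).hasSum⟩

lemma IsPMF.le_marginal_snd {p : α × β → ℝ} (hp : IsPMF p) (z : α × β) :
    p z ≤ ∑' a, p (a, z.2) :=
  (hp.2.summable.prod_symm.prod_factor z.2).le_tsum z.1 fun _ _ => hp.1 _

lemma IsPMF.prob_le_prob_compl_add (hp : IsPMF p) (S T : Set α) :
    prob p S ≤ prob p Tᶜ + prob p (S ∩ T) := by
  have summable (U : Set α) : Summable (U.indicator p) := hp.2.summable.indicator U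
  unfold prob
  rw [← (summable _).tsum_add (summable _)]
  refine (summable _).tsum_le_tsum (fun a => ?_) ((summable _).add (summable _))
  have nonneg := hp.1 a
  by_cases hS : a ∈ S <;> by_cases hT : a ∈ T <;> simp [hS, hT, nonneg]

lemma prob_inter_range_le (hp : Summable p) {q : ι → ℝ} (hq : IsPMF q) {f : ι → α}
    (hf : Function.Injective f) {S : Set α} {c : ℝ} (hc : 0 ≤ c)
    (hle : ∀ i, f i ∈ S → p (f i) ≤ c * q i) : prob p (S ∩ Set.range f) ≤ c := by
  have supp : Function.support ((S ∩ Set.range f).indicator p) ⊆ Set.range f :=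
    Set.support_indicator_subset.trans Set.inter_subset_right
  calc prob p (S ∩ Set.range f)
      = ∑' i, (S ∩ Set.range f).indicator p (f i) := (hf.tsum_eq supp).symm
    _ ≤ ∑' i, c * q i := by
        refine ((hp.indicator _).comp_injective hf).tsum_le_tsum (fun i => ?_)
          (hq.2.summable.mul_left c)
        exact Set.indicator_apply_le' (fun hi => hle i hi.1) fun _ => mul_nonneg hc (hq.1 i)
    _ = c := by rw [tsum_mul_left, hq.2.tsum_eq, mul_one]

end PMF

lemma log_div_le_log_one_div_sub_iff {t a w q γ : ℝ} (ht : 0 < t) (ha : 0 < a) (hw : 0 < w)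
    (hq : 0 < q) :
    1 / t * log (w / q) ≤ 1 / t * log (1 / a) - γ ↔ a * w ≤ exp (-(t * γ)) * q := by
  rw [log_div hw.ne' hq.ne', one_div a, log_inv,
    ← log_le_log_iff (mul_pos ha hw) (mul_pos (exp_pos _) hq), log_mul ha.ne' hw.ne',
    log_mul (exp_ne_zero _) hq.ne', log_exp]
  field_simp
  constructor <;> intro h <;> linarith

section Channel

variable {𝒱 𝒳 𝒴 : Type*} {n : ℕ} {PV : Word 𝒱 n → ℝ} {PVX : Word 𝒱 n × Word 𝒳 n → ℝ}
  {Φ : Word 𝒱 n → Word 𝒳 n → ℝ} {W : Word 𝒳 n → Word 𝒴 n → ℝ}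

lemma isPMF_jointXY {PX : Word 𝒳 n → ℝ} (hPX : IsPMF PX) (hW : ∀ x, IsPMF (W x)) :
    IsPMF (jointXY PX W) :=
  hPX.mul_kernel hW

lemma isPMF_jointLaw (hPVX : IsPMF PVX) (hW : ∀ x, IsPMF (W x)) : IsPMF (jointLaw PVX W) :=
  (hPVX.mul_kernel fun vx => hW vx.2).comp_equiv (Equiv.prodAssoc _ _ _).symm

lemma isPMF_outDist (hPVX : IsPMF PVX) (hW : ∀ x, IsPMF (W x)) : IsPMF (outDist PVX W) :=
  (hPVX.mul_kernel fun vx => hW vx.2).marginal_snd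

lemma jointLaw_le_outDist (hPVX : IsPMF PVX) (hW : ∀ x, IsPMF (W x))
    (z : Word 𝒱 n × Word 𝒳 n × Word 𝒴 n) : jointLaw PVX W z ≤ outDist PVX W z.2.2 :=
  (hPVX.mul_kernel fun vx => hW vx.2).le_marginal_snd ((z.1, z.2.1), z.2.2)

lemma jointLaw_le_exp_mul_of_log_le (hn : 1 ≤ n) (hPV : IsPMF PV) (hΦ : ∀ v, IsPMF (Φ v))
    (hW : ∀ x, IsPMF (W x)) {γ : ℝ} {v : Word 𝒱 n} {x : Word 𝒳 n} {y : Word 𝒴 n}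
    (hlog : (1 / (n : ℝ)) * log (W x y / outDist (jointXY PV Φ) W y) ≤
      (1 / (n : ℝ)) * log (1 / PV v) - γ) :
    jointLaw (jointXY PV Φ) W (v, x, y) ≤
      exp (-((n : ℝ) * γ)) * (outDist (jointXY PV Φ) W y * Φ v x) := by
  have hPVX := isPMF_jointXY hPV hΦ
  rcases ((isPMF_jointLaw hPVX hW).1 (v, x, y)).eq_or_lt with hzero | hpos
  · rw [← hzero]
    exact mul_nonneg (exp_nonneg _) (mul_nonneg ((isPMF_outDist hPVX hW).1 y) ((hΦ v).1 x))
  · have hQ : 0 < outDist (jointXY PV Φ) W y := hpos.trans_le (jointLaw_le_outDist hPVX hW _)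
    have hne : PV v * Φ v x * W x y ≠ 0 := hpos.ne'
    have hv : 0 < PV v := (hPV.1 v).lt_of_ne' (left_ne_zero_of_mul (left_ne_zero_of_mul hne))
    have hy : 0 < W x y := ((hW x).1 y).lt_of_ne' (right_ne_zero_of_mul hne)
    have hbound : PV v * W x y ≤ exp (-((n : ℝ) * γ)) * outDist (jointXY PV Φ) W y :=
      (log_div_le_log_one_div_sub_iff (by exact_mod_cast hn) hv hy hQ).1 hlog
    calc jointLaw (jointXY PV Φ) W (v, x, y)
        = PV v * W x y * Φ v x := mul_right_comm _ _ _
      _ ≤ exp (-((n : ℝ) * γ)) * outDist (jointXY PV Φ) W y * Φ v x :=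
          mul_le_mul_of_nonneg_right hbound ((hΦ v).1 x)
      _ = exp (-((n : ℝ) * γ)) * (outDist (jointXY PV Φ) W y * Φ v x) := mul_assoc _ _ _

/-- The encoder may randomize: `Φ v` is the law of the channel input when the source emits `v`. -/
theorem generalized_verdu_han_lemma_general (hn : 1 ≤ n) (hPV : IsPMF PV)
    (hΦ : ∀ v, IsPMF (Φ v)) (hW : ∀ x, IsPMF (W x)) (ψ : Word 𝒴 n → Word 𝒱 n) (γ : ℝ) :
    prob (jointLaw (jointXY PV Φ) W)
      {z : Word 𝒱 n × Word 𝒳 n × Word 𝒴 n |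
        (1 / (n : ℝ)) * log (W z.2.1 z.2.2 / outDist (jointXY PV Φ) W z.2.2) ≤
          (1 / (n : ℝ)) * log (1 / PV z.1) - γ}
    - exp (-((n : ℝ) * γ)) ≤ prob (jointLaw (jointXY PV Φ) W) {z | ψ z.2.2 ≠ z.1} := by
  have hPVX := isPMF_jointXY hPV hΦ
  have hjoint := isPMF_jointLaw hPVX hW
  let redraw : Word 𝒴 n × Word 𝒳 n → Word 𝒱 n × Word 𝒳 n × Word 𝒴 n :=
    fun yx => (ψ yx.1, yx.2, yx.1)
  have redraw_injective : redraw.Injective := fun a b hab => by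
    simp only [redraw, Prod.mk.injEq] at hab
    exact Prod.ext hab.2.2 hab.2.1
  have range_compl : (Set.range redraw)ᶜ = {z | ψ z.2.2 ≠ z.1} := by
    ext ⟨v, x, y⟩
    simp [redraw]
  have redraw_isPMF := isPMF_jointXY (isPMF_outDist hPVX hW) fun y => hΦ (ψ y)
  rw [sub_le_iff_le_add, ← range_compl]
  refine (hjoint.prob_le_prob_compl_add _ (Set.range redraw)).trans (add_le_add_right ?_ _)
  exact prob_inter_range_le hjoint.2.summable redraw_isPMF redraw_injective (exp_nonneg _)
    fun _ hlog => jointLaw_le_exp_mul_of_log_le hn hPV hΦ hW hlog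

variable [DecidableEq 𝒳]

lemma codeInput_eq_jointXY_single (PV : Word 𝒱 n → ℝ) (φ : Word 𝒱 n → Word 𝒳 n) :
    codeInput PV φ = jointXY PV fun v => Pi.single (φ v) 1 := by
  ext ⟨v, x⟩
  simp [codeInput, jointXY, Pi.single_apply]

lemma isPMF_codeInput (hPV : IsPMF PV) (φ : Word 𝒱 n → Word 𝒳 n) : IsPMF (codeInput PV φ) := by
  rw [codeInput_eq_jointXY_single]
  exact isPMF_jointXY hPV fun v => isPMF_single (φ v)

lemma prob_jointLaw_codeInput (hPV : IsPMF PV) (hW : ∀ x, IsPMF (W x))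
    (φ : Word 𝒱 n → Word 𝒳 n) (S : Set (Word 𝒱 n × Word 𝒳 n × Word 𝒴 n)) :
    prob (jointLaw (codeInput PV φ) W) S =
      ∑' v, PV v * prob (W (φ v)) {y | (v, φ v, y) ∈ S} := by
  classical
  have summable : Summable (S.indicator (jointLaw (codeInput PV φ) W)) :=
    (isPMF_jointLaw (isPMF_codeInput hPV φ) hW).2.summable.indicator S
  rw [prob, summable.tsum_prod]
  refine tsum_congr fun v => ?_
  rw [(summable.prod_factor v).tsum_prod, tsum_eq_single (φ v), prob, ← tsum_mul_left]
  · refine tsum_congr fun y => ?_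
    simp [Set.indicator_apply, jointLaw, codeInput]
  · intro x hx
    simp [Set.indicator_apply, jointLaw, codeInput, hx]

lemma prob_jointLaw_codeInput_decode_ne (hPV : IsPMF PV) (hW : ∀ x, IsPMF (W x))
    (φ : Word 𝒱 n → Word 𝒳 n) (ψ : Word 𝒴 n → Word 𝒱 n) :
    prob (jointLaw (codeInput PV φ) W) {z | ψ z.2.2 ≠ z.1} = errProb PV W φ ψ :=
  prob_jointLaw_codeInput hPV hW φ _

end Channel

/-- **Generalized Verdú–Han lemma** (Lemma 3.2). -/
theorem generalized_verdu_han_lemma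
    {𝒱 𝒳 𝒴 : Type} [Countable 𝒱] [Countable 𝒳] [Countable 𝒴] [DecidableEq 𝒳]
    (n : ℕ) (hn : 1 ≤ n)
    (PV : Word 𝒱 n → ℝ) (hPV : IsPMF PV)
    (W : Word 𝒳 n → Word 𝒴 n → ℝ) (hW : ∀ x, IsPMF (W x))
    (φ : Word 𝒱 n → Word 𝒳 n) (ψ : Word 𝒴 n → Word 𝒱 n)
    (γ : ℝ) (hγ : 0 < γ) :
    prob (jointLaw (codeInput PV φ) W)
      {z : Word 𝒱 n × Word 𝒳 n × Word 𝒴 n |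
        (1 / (n : ℝ)) * Real.log (W z.2.1 z.2.2 / outDist (codeInput PV φ) W z.2.2) ≤
          (1 / (n : ℝ)) * Real.log (1 / PV z.1) - γ}
    - Real.exp (-((n : ℝ) * γ)) ≤ errProb PV W φ ψ := by
  rw [← prob_jointLaw_codeInput_decode_ne hPV hW, codeInput_eq_jointXY_single]
  exact generalized_verdu_han_lemma_general hn hPV (fun v => isPMF_single (φ v)) hW ψ γ

end ISC
end

section
/- Equivalence of sufficient conditions (Theorem 4.3). Let V = {Vⁿ} be a general source and W = {Wⁿ} a general channel. The following are equivalent. (1) There exist a channel input X = {Xⁿ} and a sequence {γₙ} with γₙ > 0, γₙ → 0, nγₙ → ∞, such that limₙ Pr{ (1/n) log( Wⁿ(Yⁿ|Xⁿ)/P_{Yⁿ}(Yⁿ) ) ≤ (1/n) log( 1/P_{Vⁿ}(Vⁿ) ) + γₙ } = 0. (2) (Strict domination) There exist a channel input X = {Xⁿ}, a real sequence {cₙ}, and a sequence {γₙ} with γₙ > 0, γₙ → 0, nγₙ → ∞, such that limₙ ( Pr{ (1/n) log( 1/P_{Vⁿ}(Vⁿ) ) ≥ cₙ } + Pr{ (1/n)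 log( Wⁿ(Yⁿ|Xⁿ)/P_{Yⁿ}(Yⁿ) ) ≤ cₙ + γₙ } ) = 0. In both conditions Yⁿ denotes the channel output due to the input Xⁿ. -/
open Filter Real Topology

namespace ISC

/-!
Replacing the random variable `log (1 / P_{Vⁿ}) / n` by a constant `c` costs at most the probability
that it is `≥ c`, which gives (2) ⇒ (1). Conversely, let `ε` be the probability in (1), and choose
`δ → 0` slowly enough that `ε / δ → 0` and `log (1 / δ) ≤ n γ / 2`. Take `c` to be an upper
`δ`-quantile of `log (1 / P_{Vⁿ}) / n`, up to `γ / 4`, and let the new input be independent of the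
source, with the law of the old input conditioned on `S = {c ≤ log (1 / P_{Vⁿ}) / n}`. Since
`P(S) ≥ δ`, the conditioning multiplies probabilities of input-output events, and hence the output
law, by at most `1 / δ`. The information density therefore drops by at most `log (1 / δ)`, and
its small values now have probability at most `ε / δ`. The tail of the source above `c + γ / 4` has
probability at most `δ`.
-/

section Prob

variable {α β : Type*} {p : α → ℝ}

lemma IsPMF.le_one (hp : IsPMF p) (a : α) : p a ≤ 1 :=
  le_hasSum hp.2 a fun b _ => hp.1 b

lemma IsPMF.indicator_nonneg (hp : IsPMF p) (S : Set α) (a : α) : 0 ≤ S.indicator p a :=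
  Set.indicator_nonneg (fun b _ => hp.1 b) a

lemma prob_nonneg (hp : IsPMF p) (S : Set α) : 0 ≤ prob p S :=
  tsum_nonneg (hp.indicator_nonneg S)

lemma prob_univ (hp : IsPMF p) : prob p Set.univ = 1 := by
  simp [prob, hp.2.tsum_eq]

@[simp]
lemma prob_singleton (p : α → ℝ) (a : α) : prob p {a} = p a := by
  classical
  simp [prob, Set.indicator_apply]

@[simp]
lemma prob_empty (p : α → ℝ) : prob p ∅ = 0 := by
  simp [prob]

lemma prob_le_prob_of_pos (hp : IsPMF p) {S T : Set α} (h : ∀ a ∈ S, 0 < p a → a ∈ T) :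
    prob p S ≤ prob p T := by
  refine Summable.tsum_le_tsum (Set.indicator_le' (fun a ha => ?_) fun a _ =>
    hp.indicator_nonneg T a) (hp.2.summable.indicator S) (hp.2.summable.indicator T)
  rcases (hp.1 a).lt_or_eq with hpos | hzero
  · rw [Set.indicator_of_mem (h a ha hpos)]
  · exact hzero ▸ hp.indicator_nonneg T a

lemma prob_mono (hp : IsPMF p) {S T : Set α} (h : S ⊆ T) : prob p S ≤ prob p T :=
  prob_le_prob_of_pos hp fun _ ha _ => h ha

lemma prob_le_one (hp : IsPMF p) (S : Set α) : prob p S ≤ 1 :=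
  prob_univ hp ▸ prob_mono hp (Set.subset_univ S)

lemma prob_union_le (hp : IsPMF p) (S T : Set α) : prob p (S ∪ T) ≤ prob p S + prob p T := by
  have hS := hp.2.summable.indicator S
  have hT := hp.2.summable.indicator T
  calc prob p (S ∪ T)
      ≤ ∑' a, (S.indicator p a + T.indicator p a) := by
        refine Summable.tsum_le_tsum (fun a => ?_) (hp.2.summable.indicator _) (hS.add hT)
        rw [← Pi.add_apply, ← Set.indicator_union_add_inter, Pi.add_apply]
        exact le_add_of_nonneg_right (hp.indicator_nonneg _ a)
    _ = prob p S + prob p T := hS.tsum_add hT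

lemma prob_le_add_le_prob_add_prob (hp : IsPMF p) (X Y : α → ℝ) (c γ : ℝ) :
    prob p {a | X a ≤ Y a + γ} ≤ prob p {a | c ≤ Y a} + prob p {a | X a ≤ c + γ} := by
  refine (prob_mono hp fun a (ha : X a ≤ Y a + γ) => ?_).trans (prob_union_le hp _ _)
  rcases le_or_gt c (Y a) with h | h
  · exact Or.inl h
  · exact Or.inr (show X a ≤ c + γ by linarith)

lemma tendsto_prob_ge_atTop (hp : IsPMF p) (Z : α → ℝ) :
    Tendsto (fun t : ℝ => prob p {a | t ≤ Z a}) atTop (𝓝 0) := by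
  rw [← tsum_zero (β := α)]
  refine tendsto_tsum_of_dominated_convergence hp.2.summable (fun a => ?_)
    (Eventually.of_forall fun t a => ?_)
  · refine tendsto_const_nhds.congr' ?_
    filter_upwards [eventually_gt_atTop (Z a)] with t ht
    exact (Set.indicator_of_notMem (s := {a | t ≤ Z a}) ht.not_ge p).symm
  · exact (norm_indicator_le_norm_self p a).trans_eq (Real.norm_of_nonneg (hp.1 a))

lemma exists_approx_quantile (hp : IsPMF p) {Z : α → ℝ} {b : ℝ} (hZ : ∀ a, 0 < p a → b ≤ Z a)
    {η δ : ℝ} (hη : 0 < η) (hδ : 0 < δ) (hδ_le : δ ≤ 1) :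
    ∃ c, δ ≤ prob p {a | c ≤ Z a} ∧ prob p {a | c + η ≤ Z a} ≤ δ := by
  let A : Set ℝ := {c | δ ≤ prob p {a | c ≤ Z a}}
  have hA_nonempty : A.Nonempty := by
    refine ⟨b, hδ_le.trans ?_⟩
    rw [← prob_univ hp]
    exact prob_le_prob_of_pos hp fun a _ => hZ a
  have hA_bdd : BddAbove A := by
    obtain ⟨t, ht⟩ := ((tendsto_prob_ge_atTop hp Z).eventually_lt_const hδ).exists
    refine ⟨t, fun c (hc : δ ≤ prob p {a | c ≤ Z a}) => le_of_not_gt fun htc => ?_⟩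
    have hct : prob p {a | c ≤ Z a} ≤ prob p {a | t ≤ Z a} :=
      prob_mono hp fun a (ha : c ≤ Z a) => htc.le.trans ha
    exact ((hc.trans hct).trans_lt ht).false
  obtain ⟨c, hc, hlt⟩ := exists_lt_of_lt_csSup hA_nonempty (sub_lt_self (sSup A) hη)
  have hcη : c + η ∉ A := fun h => by linarith [le_csSup hA_bdd h]
  exact ⟨c, hc, (not_le.1 hcη).le⟩

/-- The law of `f a` when `a` has law `p`; `PMF.map` for real-valued mass functions. -/
noncomputable def pushforward (f : α → β) (p : α → ℝ) : β → ℝ :=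
  fun b => prob p (f ⁻¹' {b})

lemma hasSum_indicator_pushforward (hp : IsPMF p) (f : α → β) (B : Set β) :
    HasSum (B.indicator (pushforward f p)) (prob p (f ⁻¹' B)) := by
  refine ((hp.2.summable.indicator (f ⁻¹' B)).hasSum.tsum_fiberwise f).congr_fun fun b => ?_
  rw [tsum_subtype (f ⁻¹' {b}) ((f ⁻¹' B).indicator p), Set.indicator_indicator]
  by_cases hb : b ∈ B
  · rw [Set.indicator_of_mem hb, Set.inter_eq_left.2 (Set.preimage_mono (by simpa using hb))]
    rfl
  · rw [Set.indicator_of_notMem hb, ← Set.preimage_inter,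
      Set.singleton_inter_eq_empty.2 hb]
    simp

lemma prob_pushforward (hp : IsPMF p) (f : α → β) (B : Set β) :
    prob (pushforward f p) B = prob p (f ⁻¹' B) :=
  (hasSum_indicator_pushforward hp f B).tsum_eq

lemma isPMF_pushforward (hp : IsPMF p) (f : α → β) : IsPMF (pushforward f p) := by
  refine ⟨fun b => prob_nonneg hp _, ?_⟩
  simpa [prob_univ hp] using hasSum_indicator_pushforward hp f Set.univ

lemma pushforward_fst_apply (q : α × β → ℝ) (a : α) :
    pushforward Prod.fst q a = ∑' b, q (a, b) := by
  have hsupport : Function.support ((Prod.fst ⁻¹' {a}).indicator q) ⊆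
      Set.range (Prod.mk a : β → α × β) := by
    rintro ⟨a', b⟩ h
    obtain rfl : a' = a := Set.mem_of_indicator_ne_zero (f := q) h
    exact ⟨b, rfl⟩
  rw [pushforward, prob, ← (Prod.mk_right_injective a).tsum_eq hsupport]
  simp

/-- The conditional law of `p` given `S`. It is `0` if `S` has probability zero. -/
noncomputable def condLaw (p : α → ℝ) (S : Set α) : α → ℝ :=
  fun a => S.indicator p a / prob p S

lemma isPMF_condLaw (hp : IsPMF p) {S : Set α} (hS : 0 < prob p S) : IsPMF (condLaw p S) := by
  refine ⟨fun a => div_nonneg (hp.indicator_nonneg S a) hS.le, ?_⟩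
  rw [← div_self hS.ne']
  exact (hp.2.summable.indicator S).hasSum.div_const _

lemma prob_condLaw (p : α → ℝ) (S T : Set α) :
    prob (condLaw p S) T = prob p (S ∩ T) / prob p S := by
  rw [prob, prob, ← tsum_div_const, Set.inter_comm, ← Set.indicator_indicator]
  refine tsum_congr fun a => ?_
  by_cases ha : a ∈ T <;> simp [ha, condLaw]

/-- The law of `(a, b)` when `a` has law `p` and `b` has conditional law `w a`. -/
def compProd (p : α → ℝ) (w : α → β → ℝ) : α × β → ℝ :=
  fun z => p z.1 * w z.1 z.2

lemma isPMF_compProd (hp : IsPMF p) {w : α → β → ℝ} (hw : ∀ a, IsPMF (w a)) :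
    IsPMF (compProd p w) := by
  have hnonneg : ∀ z, 0 ≤ compProd p w z := fun z => mul_nonneg (hp.1 _) ((hw _).1 _)
  have hinner : ∀ a, HasSum (fun b => compProd p w (a, b)) (p a) := fun a => by
    simpa [compProd] using (hw a).2.mul_left (p a)
  have hsummable : Summable (compProd p w) :=
    (summable_prod_of_nonneg hnonneg).2
      ⟨fun a => (hinner a).summable, by simpa only [(hinner _).tsum_eq] using hp.2.summable⟩
  refine ⟨hnonneg, ?_⟩
  rw [← (hsummable.hasSum.prod_fiberwise hinner).unique hp.2]
  exact hsummable.hasSum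

lemma prob_compProd (hp : IsPMF p) {w : α → β → ℝ} (hw : ∀ a, IsPMF (w a)) (T : Set (α × β)) :
    prob (compProd p w) T = ∑' a, p a * prob (w a) (Prod.mk a ⁻¹' T) := by
  rw [prob, ((isPMF_compProd hp hw).2.summable.indicator T).tsum_prod]
  refine tsum_congr fun a => ?_
  rw [prob, ← tsum_mul_left]
  refine tsum_congr fun b => ?_
  by_cases hab : (a, b) ∈ T <;> simp [hab, compProd]

lemma pushforward_snd_compProd_const (hp : IsPMF p) {r : β → ℝ} (hr : IsPMF r) :
    pushforward Prod.snd (compProd p fun _ => r) = r := by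
  funext b
  rw [pushforward, prob_compProd hp fun _ => hr]
  simp [← Set.preimage_comp, Function.comp_def, tsum_mul_right, hp.2.tsum_eq]

lemma pushforward_fst_compProd (p : α → ℝ) {w : α → β → ℝ} (hw : ∀ a, IsPMF (w a)) :
    pushforward Prod.fst (compProd p w) = p := by
  funext a
  rw [pushforward_fst_apply]
  simp [compProd, tsum_mul_left, (hw a).2.tsum_eq]

end Prob

section Channel

variable {α β κ : Type*} {q : α × β → ℝ} {w : β → κ → ℝ}

/-- The law of (source, input, output); `jointLaw` for arbitrary types in place of words. -/
def channelLaw (q : α × β → ℝ) (w : β → κ → ℝ) : α × β × κ → ℝ :=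
  fun z => q (z.1, z.2.1) * w z.2.1 z.2.2

/-- The law of the output; `outDist` for arbitrary types in place of words. -/
noncomputable def outputLaw (q : α × β → ℝ) (w : β → κ → ℝ) (y : κ) : ℝ :=
  ∑' z : α × β, q z * w z.2 y

/-- The information density of an input-output pair, for the output law induced by `q`. -/
noncomputable def infoDensity (q : α × β → ℝ) (w : β → κ → ℝ) (z : β × κ) : ℝ :=
  log (w z.1 z.2 / outputLaw q w z.2)

lemma isPMF_channelLaw (hq : IsPMF q) (hw : ∀ b, IsPMF (w b)) : IsPMF (channelLaw q w) := by
  have h := isPMF_compProd hq fun z => hw z.2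
  exact ⟨fun z => h.1 ((z.1, z.2.1), z.2.2), (Equiv.hasSum_iff (Equiv.prodAssoc α β κ).symm).2 h.2⟩

lemma prob_channelLaw (hq : IsPMF q) (hw : ∀ b, IsPMF (w b)) (T : Set (α × β × κ)) :
    prob (channelLaw q w) T = ∑' z, q z * prob (w z.2) {y | (z.1, z.2, y) ∈ T} := by
  rw [prob, ← (Equiv.prodAssoc α β κ).tsum_eq]
  exact prob_compProd hq (fun z => hw z.2) (Equiv.prodAssoc α β κ ⁻¹' T)

lemma prob_channelLaw_preimage_fst (hq : IsPMF q) (hw : ∀ b, IsPMF (w b)) (S : Set α) :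
    prob (channelLaw q w) (Prod.fst ⁻¹' S) = prob q (Prod.fst ⁻¹' S) := by
  rw [prob_channelLaw hq hw, prob]
  refine tsum_congr fun z => ?_
  by_cases hz : z.1 ∈ S <;> simp [hz, prob_univ (hw z.2)]

lemma pushforward_snd_channelLaw (hq : IsPMF q) (hw : ∀ b, IsPMF (w b)) :
    pushforward Prod.snd (channelLaw q w) = compProd (pushforward Prod.snd q) w := by
  funext ⟨b, y⟩
  rw [pushforward, prob_channelLaw hq hw, compProd, pushforward, prob, ← tsum_mul_right]
  refine tsum_congr fun z => ?_
  by_cases hz : z.2 = b <;> simp [hz]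

lemma outputLaw_eq_prob (hq : IsPMF q) (hw : ∀ b, IsPMF (w b)) (y : κ) :
    outputLaw q w y = prob (channelLaw q w) (Prod.snd ⁻¹' (Prod.snd ⁻¹' {y})) := by
  rw [prob_channelLaw hq hw]
  exact tsum_congr fun z => congrArg (q z * ·) (prob_singleton (w z.2) y).symm

lemma channelLaw_pos (hq : IsPMF q) (hw : ∀ b, IsPMF (w b)) {z : α × β × κ}
    (hz : 0 < channelLaw q w z) : 0 < w z.2.1 z.2.2 ∧ 0 < outputLaw q w z.2.2 := by
  refine ⟨pos_of_mul_pos_right hz (hq.1 _), hz.trans_le ?_⟩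
  rw [outputLaw_eq_prob hq hw, ← prob_singleton (channelLaw q w) z]
  exact prob_mono (isPMF_channelLaw hq hw) (by simp)

lemma channelLaw_condLaw (hq : IsPMF q) (hw : ∀ b, IsPMF (w b)) (S : Set α) :
    channelLaw (condLaw q (Prod.fst ⁻¹' S)) w = condLaw (channelLaw q w) (Prod.fst ⁻¹' S) := by
  funext z
  rw [condLaw, prob_channelLaw_preimage_fst hq hw]
  by_cases hz : z.1 ∈ S <;> simp [hz, channelLaw, condLaw, div_mul_eq_mul_div]

/-- The input law under which the input is independent of the source `V` and has the law
`P(X = · | V ∈ S)`; the law of `V` is left unchanged. -/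
noncomputable def decoupledInput (q : α × β → ℝ) (S : Set α) : α × β → ℝ :=
  compProd (pushforward Prod.fst q) fun _ => pushforward Prod.snd (condLaw q (Prod.fst ⁻¹' S))

lemma isPMF_decoupledInput (hq : IsPMF q) {S : Set α} (hS : 0 < prob q (Prod.fst ⁻¹' S)) :
    IsPMF (decoupledInput q S) :=
  isPMF_compProd (isPMF_pushforward hq _) fun _ => isPMF_pushforward (isPMF_condLaw hq hS) _

lemma pushforward_fst_decoupledInput (hq : IsPMF q) {S : Set α}
    (hS : 0 < prob q (Prod.fst ⁻¹' S)) :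
    pushforward Prod.fst (decoupledInput q S) = pushforward Prod.fst q :=
  pushforward_fst_compProd _ fun _ => isPMF_pushforward (isPMF_condLaw hq hS) _

-- The joint law of input and output depends on the input law only through the law of the input.
lemma pushforward_snd_channelLaw_decoupledInput (hq : IsPMF q) (hw : ∀ b, IsPMF (w b))
    {S : Set α} (hS : 0 < prob q (Prod.fst ⁻¹' S)) :
    pushforward Prod.snd (channelLaw (decoupledInput q S) w) =
      pushforward Prod.snd (condLaw (channelLaw q w) (Prod.fst ⁻¹' S)) := by
  have hcond := isPMF_condLaw hq hS
  calc pushforward Prod.snd (channelLaw (decoupledInput q S) w)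
      = compProd (pushforward Prod.snd (decoupledInput q S)) w :=
        pushforward_snd_channelLaw (isPMF_decoupledInput hq hS) hw
    _ = compProd (pushforward Prod.snd (condLaw q (Prod.fst ⁻¹' S))) w := by
        rw [decoupledInput, pushforward_snd_compProd_const (isPMF_pushforward hq _)
          (isPMF_pushforward hcond _)]
    _ = pushforward Prod.snd (channelLaw (condLaw q (Prod.fst ⁻¹' S)) w) :=
        (pushforward_snd_channelLaw hcond hw).symm
    _ = pushforward Prod.snd (condLaw (channelLaw q w) (Prod.fst ⁻¹' S)) := by
        rw [channelLaw_condLaw hq hw]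

lemma prob_channelLaw_decoupledInput (hq : IsPMF q) (hw : ∀ b, IsPMF (w b)) {S : Set α}
    (hS : 0 < prob q (Prod.fst ⁻¹' S)) (B : Set (β × κ)) :
    prob (channelLaw (decoupledInput q S) w) (Prod.snd ⁻¹' B) =
      prob (channelLaw q w) (Prod.fst ⁻¹' S ∩ Prod.snd ⁻¹' B) / prob q (Prod.fst ⁻¹' S) := by
  have hchannel := isPMF_channelLaw hq hw
  have hprob := prob_channelLaw_preimage_fst hq hw S
  rw [← prob_pushforward (isPMF_channelLaw (isPMF_decoupledInput hq hS) hw),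
    pushforward_snd_channelLaw_decoupledInput hq hw hS,
    prob_pushforward (isPMF_condLaw hchannel (hprob ▸ hS)), prob_condLaw, hprob]

lemma outputLaw_decoupledInput_le (hq : IsPMF q) (hw : ∀ b, IsPMF (w b)) {S : Set α}
    (hS : 0 < prob q (Prod.fst ⁻¹' S)) (y : κ) :
    outputLaw (decoupledInput q S) w y ≤ outputLaw q w y / prob q (Prod.fst ⁻¹' S) := by
  rw [outputLaw_eq_prob (isPMF_decoupledInput hq hS) hw,
    prob_channelLaw_decoupledInput hq hw hS, outputLaw_eq_prob hq hw]
  gcongr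
  exact prob_mono (isPMF_channelLaw hq hw) Set.inter_subset_right

lemma infoDensity_le_decoupledInput_add (hq : IsPMF q) (hw : ∀ b, IsPMF (w b)) {S : Set α}
    (hS : 0 < prob q (Prod.fst ⁻¹' S)) {z : β × κ} (hwz : 0 < w z.1 z.2)
    (hout : 0 < outputLaw (decoupledInput q S) w z.2) :
    infoDensity q w z ≤
      infoDensity (decoupledInput q S) w z - log (prob q (Prod.fst ⁻¹' S)) := by
  have hle := outputLaw_decoupledInput_le hq hw hS z.2
  have hout' : 0 < outputLaw q w z.2 := (div_pos_iff_of_pos_right hS).1 (hout.trans_le hle)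
  have hlog := log_le_log hout hle
  rw [log_div hout'.ne' hS.ne'] at hlog
  rw [infoDensity, infoDensity, log_div hwz.ne' hout'.ne', log_div hwz.ne' hout.ne']
  linarith

lemma prob_infoDensity_le_prob_add_prob_infoDensity (hq : IsPMF q) (hw : ∀ b, IsPMF (w b))
    (Z : α → ℝ) (c t γ : ℝ) :
    prob (channelLaw q w) {z | t * infoDensity q w z.2 ≤ Z z.1 + γ} ≤
      prob (pushforward Prod.fst q) {a | c ≤ Z a} +
        prob (channelLaw q w) {z | t * infoDensity q w z.2 ≤ c + γ} := by
  rw [prob_pushforward hq, ← prob_channelLaw_preimage_fst hq hw]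
  exact prob_le_add_le_prob_add_prob (isPMF_channelLaw hq hw) _ _ c γ

lemma prob_infoDensity_decoupledInput_le (hq : IsPMF q) (hw : ∀ b, IsPMF (w b)) {Z : α → ℝ}
    {c : ℝ} (hc : 0 < prob q (Prod.fst ⁻¹' {a | c ≤ Z a})) {t : ℝ} (ht : 0 ≤ t) (s : ℝ) :
    prob (channelLaw (decoupledInput q {a | c ≤ Z a}) w)
        {z | t * infoDensity (decoupledInput q {a | c ≤ Z a}) w z.2 ≤ c + s} ≤
      prob (channelLaw q w)
          {z | t * infoDensity q w z.2 ≤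
            Z z.1 + (s - t * log (prob q (Prod.fst ⁻¹' {a | c ≤ Z a})))} /
        prob q (Prod.fst ⁻¹' {a | c ≤ Z a}) := by
  set S : Set α := {a | c ≤ Z a}
  let B : Set (β × κ) := {z | t * infoDensity (decoupledInput q S) w z ≤ c + s ∧
    0 < w z.1 z.2 ∧ 0 < outputLaw (decoupledInput q S) w z.2}
  have hdecoupled := isPMF_decoupledInput hq hc
  calc prob (channelLaw (decoupledInput q S) w)
          {z | t * infoDensity (decoupledInput q S) w z.2 ≤ c + s}
      ≤ prob (channelLaw (decoupledInput q S) w) (Prod.snd ⁻¹' B) :=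
        prob_le_prob_of_pos (isPMF_channelLaw hdecoupled hw) fun z hz hpos =>
          ⟨hz, channelLaw_pos hdecoupled hw hpos⟩
    _ = prob (channelLaw q w) (Prod.fst ⁻¹' S ∩ Prod.snd ⁻¹' B) / prob q (Prod.fst ⁻¹' S) :=
        prob_channelLaw_decoupledInput hq hw hc B
    _ ≤ _ := by
        gcongr
        refine prob_mono (isPMF_channelLaw hq hw) ?_
        rintro z ⟨hzS : c ≤ Z z.1, hzB, hwz, hout⟩
        have hdensity := mul_le_mul_of_nonneg_left
          (infoDensity_le_decoupledInput_add hq hw hc hwz hout) ht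
        rw [mul_sub] at hdensity
        change t * infoDensity q w z.2 ≤ Z z.1 + (s - t * log (prob q (Prod.fst ⁻¹' S)))
        linarith

lemma exists_input_prob_add_prob_infoDensity_le (hq : IsPMF q) (hw : ∀ b, IsPMF (w b))
    {Z : α → ℝ} {b : ℝ} (hZ : ∀ a, 0 < pushforward Prod.fst q a → b ≤ Z a) {t γ δ : ℝ}
    (ht : 0 ≤ t) (hγ : 0 < γ) (hδ : 0 < δ) (hδ_le : δ ≤ 1) (hδγ : t * -log δ ≤ γ / 2) :
    ∃ (q' : α × β → ℝ) (c : ℝ), IsPMF q' ∧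
      pushforward Prod.fst q' = pushforward Prod.fst q ∧
      prob (pushforward Prod.fst q) {a | c ≤ Z a} +
          prob (channelLaw q' w) {z | t * infoDensity q' w z.2 ≤ c + γ / 4} ≤
        δ + prob (channelLaw q w) {z | t * infoDensity q w z.2 ≤ Z z.1 + γ} / δ := by
  obtain ⟨c, hc, hcγ⟩ := exists_approx_quantile (isPMF_pushforward hq Prod.fst) hZ
    (show 0 < γ / 4 by positivity) hδ hδ_le
  rw [prob_pushforward hq] at hc
  have hpos := hδ.trans_le hc
  refine ⟨decoupledInput q {a | c ≤ Z a}, c + γ / 4, isPMF_decoupledInput hq hpos,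
    pushforward_fst_decoupledInput hq hpos, add_le_add hcγ ?_⟩
  have hchannel := isPMF_channelLaw hq hw
  have hlog : t * log δ ≤ t * log (prob q (Prod.fst ⁻¹' {a | c ≤ Z a})) := by gcongr
  rw [add_assoc]
  refine (prob_infoDensity_decoupledInput_le hq hw hpos ht _).trans
    (div_le_div₀ (prob_nonneg hchannel _) (prob_mono hchannel fun z hz => ?_) hδ hc)
  change t * infoDensity q w z.2 ≤ _ at hz ⊢
  linarith

end Channel

lemma exists_tendsto_zero_dominating {ι : Type*} {l : Filter ι} {ε r : ι → ℝ}
    (hε : ∀ i, ε i ∈ Set.Icc 0 1) (hr : ∀ i, 0 ≤ r i) (hε_lim : Tendsto ε l (𝓝 0))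
    (hr_lim : Tendsto r l atTop) :
    ∃ δ : ι → ℝ, (∀ i, 0 < δ i) ∧ (∀ i, δ i ≤ 1) ∧ (∀ i, -log (δ i) ≤ r i) ∧
      Tendsto δ l (𝓝 0) ∧ Tendsto (fun i => ε i / δ i) l (𝓝 0) := by
  have hsqrt : Tendsto (fun i => √(ε i)) l (𝓝 0) := by
    simpa using hε_lim.sqrt
  have hpos : ∀ i, 0 < max √(ε i) (exp (-r i)) := fun i => lt_max_of_lt_right (exp_pos _)
  refine ⟨fun i => max √(ε i) (exp (-r i)), hpos, fun i => ?_, fun i => ?_, ?_, ?_⟩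
  · exact max_le (sqrt_le_one.2 (hε i).2) (exp_le_one_iff.2 (neg_nonpos.2 (hr i)))
  · rw [neg_le, le_log_iff_exp_le (hpos i)]
    exact le_max_right _ _
  · simpa using hsqrt.max (tendsto_exp_neg_atTop_nhds_zero.comp hr_lim)
  · refine squeeze_zero (fun i => div_nonneg (hε i).1 (hpos i).le) (fun i => ?_) hsqrt
    rw [div_le_iff₀ (hpos i)]
    calc ε i = √(ε i) * √(ε i) := (mul_self_sqrt (hε i).1).symm
      _ ≤ √(ε i) * max √(ε i) (exp (-r i)) := by gcongr; exact le_max_left _ _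

lemma one_div_mul_log_one_div_nonneg {α : Type*} {p : α → ℝ} (hp : IsPMF p) (n : ℕ) {a : α}
    (ha : 0 < p a) : 0 ≤ (1 / (n : ℝ)) * log (1 / p a) :=
  mul_nonneg (by positivity) (log_nonneg (one_le_one_div ha (hp.le_one a)))

theorem equivalence_of_sufficient_conditions_general {α β κ : ℕ → Type*}
    (p : (n : ℕ) → α n → ℝ) (hp : ∀ n, IsPMF (p n))
    (w : (n : ℕ) → β n → κ n → ℝ) (hw : ∀ n x, IsPMF (w n x)) :
    (∃ (q : (n : ℕ) → α n × β n → ℝ) (γ : ℕ → ℝ),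
      (∀ n, IsPMF (q n)) ∧ (∀ n a, ∑' b, q n (a, b) = p n a) ∧
      (∀ n, 0 < γ n) ∧ Tendsto γ atTop (𝓝 0) ∧
      Tendsto (fun n : ℕ => (n : ℝ) * γ n) atTop atTop ∧
      Tendsto (fun n =>
        prob (channelLaw (q n) (w n))
          {z | (1 / (n : ℝ)) * infoDensity (q n) (w n) z.2 ≤
            (1 / (n : ℝ)) * log (1 / p n z.1) + γ n}) atTop (𝓝 0))
    ↔
    (∃ (q : (n : ℕ) → α n × β n → ℝ) (c γ : ℕ → ℝ),
      (∀ n, IsPMF (q n)) ∧ (∀ n a, ∑' b, q n (a, b) = p n a) ∧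
      (∀ n, 0 < γ n) ∧ Tendsto γ atTop (𝓝 0) ∧
      Tendsto (fun n : ℕ => (n : ℝ) * γ n) atTop atTop ∧
      Tendsto (fun n =>
        prob (p n) {a | c n ≤ (1 / (n : ℝ)) * log (1 / p n a)} +
        prob (channelLaw (q n) (w n))
          {z | (1 / (n : ℝ)) * infoDensity (q n) (w n) z.2 ≤ c n + γ n}) atTop (𝓝 0)) := by
  simp only [← pushforward_fst_apply, ← funext_iff]
  constructor
  · rintro ⟨q, γ, hq, rfl, hγ, hγ_lim, hnγ, hlim⟩
    have hchannel := fun n => isPMF_channelLaw (hq n) (hw n)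
    obtain ⟨δ, hδ, hδ_le, hδγ, hδ_lim, hratio⟩ := exists_tendsto_zero_dominating
      (fun n => ⟨prob_nonneg (hchannel n) _, prob_le_one (hchannel n) _⟩)
      (fun n => by have := hγ n; positivity) hlim (hnγ.atTop_div_const two_pos)
    have hslack : ∀ n : ℕ, 1 / (n : ℝ) * -log (δ n) ≤ γ n / 2 := fun n => by
      rw [one_div]
      exact inv_mul_le_of_le_mul₀ n.cast_nonneg (half_pos (hγ n)).le
        ((hδγ n).trans_eq (mul_div_assoc _ _ _))
    choose q' c hq' hqp' hle using fun n => exists_input_prob_add_prob_infoDensity_le (hq n) (hw n)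
      (fun a ha => one_div_mul_log_one_div_nonneg (hp n) n ha)
      (by positivity) (hγ n) (hδ n) (hδ_le n) (hslack n)
    refine ⟨q', c, fun n => γ n / 4, hq', funext hqp', fun n => div_pos (hγ n) four_pos,
      by simpa using hγ_lim.div_const 4,
      by simpa only [mul_div_assoc] using hnγ.atTop_div_const four_pos, ?_⟩
    exact squeeze_zero (fun n => add_nonneg (prob_nonneg (hp n) _)
      (prob_nonneg (isPMF_channelLaw (hq' n) (hw n)) _)) hle (by simpa using hδ_lim.add hratio)
  · rintro ⟨q, c, γ, hq, rfl, hγ, hγ_lim, hnγ, hlim⟩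
    refine ⟨q, γ, hq, rfl, hγ, hγ_lim, hnγ, ?_⟩
    exact squeeze_zero (fun n => prob_nonneg (isPMF_channelLaw (hq n) (hw n)) _)
      (fun n => prob_infoDensity_le_prob_add_prob_infoDensity (hq n) (hw n)
        (fun a => 1 / (n : ℝ) * log (1 / pushforward Prod.fst (q n) a)) (c n) (1 / n) (γ n)) hlim

/-- **Equivalence of sufficient conditions** (Theorem 4.3). -/
theorem equivalence_of_sufficient_conditions
    {𝒱 𝒳 𝒴 : Type} [Countable 𝒱] [Countable 𝒳] [Countable 𝒴]
    (PV : (n : ℕ) → Word 𝒱 n → ℝ) (hPV : ∀ n, IsPMF (PV n))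
    (W : (n : ℕ) → Word 𝒳 n → Word 𝒴 n → ℝ) (hW : ∀ n x, IsPMF (W n x)) :
    (∃ (PVX : (n : ℕ) → Word 𝒱 n × Word 𝒳 n → ℝ) (γ : ℕ → ℝ),
      (∀ n, IsPMF (PVX n)) ∧
      (∀ n v, (∑' x : Word 𝒳 n, PVX n (v, x)) = PV n v) ∧
      (∀ n, 0 < γ n) ∧ Tendsto γ atTop (nhds 0) ∧
      Tendsto (fun n : ℕ => (n : ℝ) * γ n) atTop atTop ∧
      Tendsto (fun n =>
        prob (jointLaw (PVX n) (W n))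
          {z : Word 𝒱 n × Word 𝒳 n × Word 𝒴 n |
            (1 / (n : ℝ)) * Real.log (W n z.2.1 z.2.2 / outDist (PVX n) (W n) z.2.2) ≤
              (1 / (n : ℝ)) * Real.log (1 / PV n z.1) + γ n}) atTop (nhds 0))
    ↔
    (∃ (PVX : (n : ℕ) → Word 𝒱 n × Word 𝒳 n → ℝ) (c : ℕ → ℝ) (γ : ℕ → ℝ),
      (∀ n, IsPMF (PVX n)) ∧
      (∀ n v, (∑' x : Word 𝒳 n, PVX n (v, x)) = PV n v) ∧
      (∀ n, 0 < γ n) ∧ Tendsto γ atTop (nhds 0) ∧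
      Tendsto (fun n : ℕ => (n : ℝ) * γ n) atTop atTop ∧
      Tendsto (fun n =>
        prob (PV n) {v : Word 𝒱 n | c n ≤ (1 / (n : ℝ)) * Real.log (1 / PV n v)} +
        prob (jointLaw (PVX n) (W n))
          {z : Word 𝒱 n × Word 𝒳 n × Word 𝒴 n |
            (1 / (n : ℝ)) * Real.log (W n z.2.1 z.2.2 / outDist (PVX n) (W n) z.2.2) ≤
              c n + γ n}) atTop (nhds 0)) :=
  equivalence_of_sufficient_conditions_general PV hPV W hW

end ISC
end
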